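/- Let d be even and let P ⊆ ℝ^d be a d-dimensional simplicial reflexive polytope with exactly 3d vertices. Then P splits into d/2 copies of V2. -/

import Mathlib

noncomputable section

/-- The standard inner product on `ℝ^d`. -/
def dotp {d : ℕ} (x y : Fin d → ℝ) : ℝ := ∑ i, x i * y i

/-- `x` is a point of the lattice `ℤ^d`. -/
def IsLP {d : ℕ} (x : Fin d → ℝ) : Prop := ∀ i, ∃ n : ℤ, x i = (n : ℝ)

/-- A lattice polytope: convex hull of finitely many lattice points. -/
def IsLatticePolytope {d : ℕ} (P : Set (Fin d → ℝ)) : Prop :=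
  ∃ V : Finset (Fin d → ℝ), (∀ v ∈ V, IsLP v) ∧ P = convexHull ℝ (V : Set (Fin d → ℝ))

/-- The dual polytope `P* = {x | ⟨x,y⟩ ≤ 1 ∀ y ∈ P}`. -/
def dualPolytope {d : ℕ} (P : Set (Fin d → ℝ)) : Set (Fin d → ℝ) :=
  {x | ∀ y ∈ P, dotp x y ≤ 1}

/-- `P` is a reflexive polytope: a (`d`-dimensional) lattice polytope with `0` in its
interior whose dual is again a lattice polytope. -/
def IsReflexive {d : ℕ} (P : Set (Fin d → ℝ)) : Prop :=
  IsLatticePolytope P ∧ (0 : Fin d → ℝ) ∈ interior P ∧ IsLatticePolytope (dualPolytope P)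

/-- `F` is a facet of `P` with (uniquely determined) outer normal `u`, normalized by
`⟨u, F⟩ = 1` (possible since `0` is in the interior of `P`). -/
def IsFacetNormal {d : ℕ} (P F : Set (Fin d → ℝ)) (u : Fin d → ℝ) : Prop :=
  F.Nonempty ∧ (∀ y ∈ P, dotp u y ≤ 1) ∧ F = {y ∈ P | dotp u y = 1} ∧
    Module.finrank ℝ (vectorSpan ℝ F) = d - 1

/-- `F` is a facet of `P`. -/
def IsFacet {d : ℕ} (P F : Set (Fin d → ℝ)) : Prop := ∃ u, IsFacetNormal P F u

/-- `P` is simplicial: every facet has exactly `d` vertices. -/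
def IsSimplicial {d : ℕ} (P : Set (Fin d → ℝ)) : Prop :=
  ∀ F, IsFacet P F → (Set.extremePoints ℝ F).ncard = d

/-- Vertices of the hexagon `V₂`. -/
def V2v : Set (Fin 2 → ℤ) := {![1,0], ![0,1], ![1,1], ![-1,0], ![0,-1], ![-1,-1]}

/-- Vertices of the pentagon `Ṽ₂`. -/
def tV2v : Set (Fin 2 → ℤ) := {![1,0], ![0,1], ![1,1], ![-1,0], ![0,-1]}

/-- Vertices of the pentagon `E₁`. -/
def E1v : Set (Fin 2 → ℤ) := {![1,0], ![-1,2], ![-1,1], ![0,-1], ![1,-1]}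

/-- Vertices of the pentagon `E₂`. -/
def E2v : Set (Fin 2 → ℤ) := {![1,0], ![0,1], ![-1,1], ![-1,-1], ![1,-1]}

/-- Vertices of the 3-polytope `Q₃`. -/
def Q3v : Set (Fin 3 → ℤ) :=
  {![1,0,0], ![-1,0,0], ![0,1,0], ![0,-1,0], ![1,1,0], ![-1,-1,0], ![0,0,1], ![0,0,-1]}

/-- Vertices of the 3-polytope `Q₃'`. -/
def Q3'v : Set (Fin 3 → ℤ) :=
  {![1,0,0], ![-1,0,0], ![0,1,0], ![0,-1,0], ![1,1,0], ![-1,-1,0], ![0,0,1], ![1,0,-1]}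

/-- Embed `ℤ²` into coordinates `o, o+1` of `ℝ^d`. -/
def embed2 (d o : ℕ) (v : Fin 2 → ℤ) : Fin d → ℝ :=
  fun i => if (i : ℕ) = o then (v 0 : ℝ) else if (i : ℕ) = o + 1 then (v 1 : ℝ) else 0

/-- Embed `ℤ³` into coordinates `0, 1, 2` of `ℝ^d`. -/
def embed3 (d : ℕ) (v : Fin 3 → ℤ) : Fin d → ℝ :=
  fun i => if (i : ℕ) = 0 then (v 0 : ℝ) else if (i : ℕ) = 1 then (v 1 : ℝ)
    else if (i : ℕ) = 2 then (v 2 : ℝ) else 0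

/-- Standard model of a polytope in `ℝ^d` that splits into a polygon with vertex set `Q`
(in coordinates `0,1`) and `(d-2)/2` copies of `V₂` (in the remaining coordinate pairs). -/
def splitModel2 (d : ℕ) (Q : Set (Fin 2 → ℤ)) : Set (Fin d → ℝ) :=
  convexHull ℝ (embed2 d 0 '' Q ∪ ⋃ j ∈ Finset.range ((d - 2) / 2), embed2 d (2 * j + 2) '' V2v)

/-- Standard model of a polytope in `ℝ^d` that splits into a 3-polytope with vertex set `Q`
(in coordinates `0,1,2`) and `(d-3)/2` copies of `V₂` (in the remaining coordinate pairs). -/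
def splitModel3 (d : ℕ) (Q : Set (Fin 3 → ℤ)) : Set (Fin d → ℝ) :=
  convexHull ℝ (embed3 d '' Q ∪ ⋃ j ∈ Finset.range ((d - 3) / 2), embed2 d (2 * j + 3) '' V2v)

/-- Standard model of a polytope in `ℝ^d` that splits into `d/2` copies of `V₂`. -/
def splitModelV2 (d : ℕ) : Set (Fin d → ℝ) :=
  convexHull ℝ (⋃ j ∈ Finset.range (d / 2), embed2 d (2 * j) '' V2v)

/-- `φ` is a unimodular transformation: a linear automorphism of `ℝ^d` mapping the lattice
`ℤ^d` onto itself. `P` splits into given polytopes iff some unimodular transformation maps `P`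
onto the corresponding standard model. -/
def Unimodular {d : ℕ} (φ : (Fin d → ℝ) ≃ₗ[ℝ] (Fin d → ℝ)) : Prop :=
  ∀ x, IsLP x ↔ IsLP (φ x)

section helpers

variable {d : ℕ}

lemma dotp_add_r (u x y : Fin d → ℝ) : dotp u (x + y) = dotp u x + dotp u y := by
  simp [dotp, mul_add, Finset.sum_add_distrib]

lemma dotp_smul_r (u x : Fin d → ℝ) (c : ℝ) : dotp u (c • x) = c * dotp u x := by
  simp only [dotp, Finset.mul_sum, Pi.smul_apply, smul_eq_mul]
  exact Finset.sum_congr rfl fun i _ => by ring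

lemma dotp_add_l (u x y : Fin d → ℝ) : dotp (x + y) u = dotp x u + dotp y u := by
  simp [dotp, add_mul, Finset.sum_add_distrib]

lemma dotp_smul_l (u x : Fin d → ℝ) (c : ℝ) : dotp (c • x) u = c * dotp x u := by
  simp only [dotp, Finset.mul_sum, Pi.smul_apply, smul_eq_mul]
  exact Finset.sum_congr rfl fun i _ => by ring

/-- The inner product with `u` as a linear functional. -/
def dotL (u : Fin d → ℝ) : (Fin d → ℝ) →ₗ[ℝ] ℝ where
  toFun := dotp u
  map_add' := dotp_add_r u
  map_smul' c x := by simp [dotp_smul_r]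

@[simp] lemma dotL_apply (u x : Fin d → ℝ) : dotL u x = dotp u x := rfl

lemma dotp_neg_r (u x : Fin d → ℝ) : dotp u (-x) = - dotp u x := map_neg (dotL u) x

lemma dotp_zero_r (u : Fin d → ℝ) : dotp u 0 = 0 := map_zero (dotL u)

lemma dotp_sub_r (u x y : Fin d → ℝ) : dotp u (x - y) = dotp u x - dotp u y :=
  map_sub (dotL u) x y

lemma dotp_comm (u x : Fin d → ℝ) : dotp u x = dotp x u := by
  simp [dotp, mul_comm]

lemma dotp_cont (u : Fin d → ℝ) : Continuous (dotp u) := by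
  unfold dotp; fun_prop

lemma dotp_self_pos {x : Fin d → ℝ} (hx : x ≠ 0) : 0 < dotp x x := by
  obtain ⟨i, hi⟩ := Function.ne_iff.1 hx
  refine Finset.sum_pos' (fun j _ => mul_self_nonneg _) ⟨i, Finset.mem_univ _, ?_⟩
  exact mul_self_pos.2 hi

lemma exists_vec (f : (Fin d → ℝ) →ₗ[ℝ] ℝ) : ∃ y, ∀ x, f x = dotp y x := by
  refine ⟨fun i => f (Pi.single i 1), fun x => ?_⟩
  rw [LinearMap.pi_apply_eq_sum_univ f x]
  simp only [dotp, smul_eq_mul]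
  refine Finset.sum_congr rfl fun i _ => ?_
  rw [mul_comm]
  congr 2
  ext j
  simp [Pi.single_apply, eq_comm]

lemma dotp_int {x y : Fin d → ℝ} (hx : IsLP x) (hy : IsLP y) : ∃ n : ℤ, dotp x y = n := by
  choose a ha using hx
  choose b hb using hy
  exact ⟨∑ i, a i * b i, by simp [dotp, ha, hb]⟩

lemma lp_compact {P : Set (Fin d → ℝ)} (h : IsLatticePolytope P) : IsCompact P := by
  obtain ⟨V, -, rfl⟩ := h
  exact V.finite_toSet.isCompact_convexHull ℝ

lemma lp_convex {P : Set (Fin d → ℝ)} (h : IsLatticePolytope P) : Convex ℝ P := by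
  obtain ⟨V, -, rfl⟩ := h
  exact convex_convexHull ℝ _

lemma lp_ext_lp {P : Set (Fin d → ℝ)} (h : IsLatticePolytope P) :
    ∀ x ∈ Set.extremePoints ℝ P, IsLP x := by
  obtain ⟨V, hV, rfl⟩ := h
  intro x hx
  exact hV x (by simpa using extremePoints_convexHull_subset hx)

lemma lp_ext_fin {P : Set (Fin d → ℝ)} (h : IsLatticePolytope P) :
    (Set.extremePoints ℝ P).Finite := by
  obtain ⟨V, hV, rfl⟩ := h
  exact V.finite_toSet.subset extremePoints_convexHull_subset

lemma lp_hull {P : Set (Fin d → ℝ)} (h : IsLatticePolytope P) :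
    convexHull ℝ (Set.extremePoints ℝ P) = P := by
  have := closure_convexHull_extremePoints (lp_compact h) (lp_convex h)
  rwa [((lp_ext_fin h).isClosed_convexHull ℝ).closure_eq] at this

lemma le_of_ext {P : Set (Fin d → ℝ)} (h : IsLatticePolytope P) {u : Fin d → ℝ} {c : ℝ}
    (hu : ∀ x ∈ Set.extremePoints ℝ P, dotp u x ≤ c) : ∀ x ∈ P, dotp u x ≤ c := by
  intro x hx
  rw [← lp_hull h] at hx
  have hc : Convex ℝ {x | dotL u x ≤ c} := convex_halfSpace_le (dotL u).isLinear c
  exact convexHull_min (t := {x | dotL u x ≤ c}) hu hc hx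

/-- The vertices of `P` on the face defined by `u`. -/
def act (P : Set (Fin d → ℝ)) (u : Fin d → ℝ) : Set (Fin d → ℝ) :=
  {x ∈ Set.extremePoints ℝ P | dotp u x = 1}

/-- Facet normals. -/
def IsFN (P : Set (Fin d → ℝ)) (u : Fin d → ℝ) : Prop :=
  u ∈ dualPolytope P ∧ Submodule.span ℝ (act P u) = ⊤

lemma fn_ext {P : Set (Fin d → ℝ)} {u : Fin d → ℝ} (hu : IsFN P u) :
    u ∈ Set.extremePoints ℝ (dualPolytope P) := by
  refine mem_extremePoints_iff_left.2 ⟨hu.1, ?_⟩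
  rintro y hy z hz ⟨a, b, ha, hb, hab, rfl⟩
  have key : ∀ x ∈ act P (a • y + b • z), dotp y x = 1 := by
    intro x hx
    have h1 := hy x hx.1.1
    have h2 := hz x hx.1.1
    have h3 := hx.2
    rw [dotp_add_l, dotp_smul_l, dotp_smul_l] at h3
    nlinarith
  have h2 : Submodule.span ℝ (act P (a • y + b • z)) ≤
      LinearMap.ker (dotL y - dotL (a • y + b • z)) := by
    rw [Submodule.span_le]
    intro x hx
    simp [key x hx, hx.2]
  rw [hu.2, top_le_iff, LinearMap.ker_eq_top] at h2
  by_contra hne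
  have h3 := dotp_self_pos (sub_ne_zero.2 hne)
  have h4 := LinearMap.congr_fun h2 (y - (a • y + b • z))
  simp only [LinearMap.sub_apply, dotL_apply, LinearMap.zero_apply] at h4
  rw [dotp_comm _ (y - _), dotp_comm _ (y - _), ← dotp_sub_r] at h4
  exact h3.ne' h4

lemma ext_fn {P : Set (Fin d → ℝ)} (hP : IsLatticePolytope P) {u : Fin d → ℝ}
    (hu : u ∈ Set.extremePoints ℝ (dualPolytope P)) : IsFN P u := by
  refine ⟨hu.1, ?_⟩
  by_contra hne
  obtain ⟨f, hf0, hf⟩ := Submodule.exists_le_ker_of_lt_top _ (lt_top_iff_ne_top.2 hne)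
  obtain ⟨w, hw⟩ := exists_vec f
  have hw0 : w ≠ 0 := by
    rintro rfl
    apply hf0
    ext i
    simp [hw, dotp]
  have hact : ∀ x ∈ act P u, dotp w x = 0 := fun x hx => by
    rw [← hw]; exact hf (Submodule.subset_span hx)
  have hev : ∀ᶠ ε : ℝ in nhdsWithin 0 (Set.Ioi 0), ∀ x ∈ Set.extremePoints ℝ P,
      dotp u x + ε * dotp w x ≤ 1 ∧ dotp u x - ε * dotp w x ≤ 1 := by
    rw [(lp_ext_fin hP).eventually_all]
    intro x hx
    by_cases h1 : dotp u x = 1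
    · filter_upwards with ε
      simp [hact x ⟨hx, h1⟩, h1]
    · have h2 : dotp u x < 1 := lt_of_le_of_ne (hu.1 x hx.1) h1
      have c1 : Continuous fun ε : ℝ => dotp u x + ε * dotp w x := by fun_prop
      have c2 : Continuous fun ε : ℝ => dotp u x - ε * dotp w x := by fun_prop
      have e1 := c1.continuousAt.eventually_lt (x₀ := 0) (continuousAt_const (y := (1:ℝ))) (by simpa)
      have e2 := c2.continuousAt.eventually_lt (x₀ := 0) (continuousAt_const (y := (1:ℝ))) (by simpa)
      filter_upwards [nhdsWithin_le_nhds e1, nhdsWithin_le_nhds e2] with ε h3 h4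
      exact ⟨h3.le, h4.le⟩
  obtain ⟨ε, hε, hpos⟩ := (hev.and self_mem_nhdsWithin).exists
  have hpos : 0 < ε := hpos
  have m1 : u + ε • w ∈ dualPolytope P := by
    apply le_of_ext hP
    intro x hx
    rw [dotp_add_l, dotp_smul_l]
    exact (hε x hx).1
  have m2 : u + (-ε) • w ∈ dualPolytope P := by
    apply le_of_ext hP
    intro x hx
    rw [dotp_add_l, dotp_smul_l]
    linarith [(hε x hx).2]
  have := hu.2 m1 m2 ⟨1/2, 1/2, by norm_num, by norm_num, by norm_num, by module⟩
  simp [hpos.ne', hw0] at this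

lemma dual_le {P : Set (Fin d → ℝ)} (hP : IsReflexive P) {s : Fin d → ℝ} {c : ℝ}
    (h : ∀ u, IsFN P u → dotp u s ≤ c) : ∀ u ∈ dualPolytope P, dotp u s ≤ c := by
  intro u hu
  rw [dotp_comm]
  refine le_of_ext hP.2.2 (fun x hx => ?_) u hu
  rw [dotp_comm]
  exact h x (ext_fn hP.1 hx)

lemma fn_lp {P : Set (Fin d → ℝ)} (hP : IsReflexive P) {u} (hu : IsFN P u) : IsLP u :=
  lp_ext_lp hP.2.2 u (fn_ext hu)

lemma fn_int {P : Set (Fin d → ℝ)} (hP : IsReflexive P) {u x} (hu : IsFN P u)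
    (hx : x ∈ Set.extremePoints ℝ P) : ∃ n : ℤ, dotp u x = n :=
  dotp_int (fn_lp hP hu) (lp_ext_lp hP.1 x hx)

lemma bipolar {P : Set (Fin d → ℝ)} (hP : IsReflexive P) {s : Fin d → ℝ}
    (h : ∀ u, IsFN P u → dotp u s ≤ 1) : s ∈ P := by
  by_contra hs
  obtain ⟨f, c, hf, hc⟩ := geometric_hahn_banach_closed_point (lp_convex hP.1)
    (lp_compact hP.1).isClosed hs
  obtain ⟨y, hy⟩ := exists_vec (f : (Fin d → ℝ) →ₗ[ℝ] ℝ)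
  have hy : ∀ x, f x = dotp y x := hy
  have hc0 : 0 < c := by simpa using hf 0 (interior_subset hP.2.1)
  have : c⁻¹ • y ∈ dualPolytope P := by
    intro x hx
    rw [dotp_smul_l, ← hy, inv_mul_le_iff₀ hc0]
    linarith [hf x hx]
  have h2 := dual_le hP h _ this
  rw [dotp_smul_l, ← hy, inv_mul_le_iff₀ hc0] at h2
  linarith

lemma eq_zero_of_fn {P : Set (Fin d → ℝ)} (hP : IsReflexive P) {s : Fin d → ℝ}
    (h : ∀ u, IsFN P u → dotp u s ≤ 0) : s = 0 := by
  by_contra hs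
  obtain ⟨M, hM⟩ := ((lp_compact hP.1).image (dotp_cont s)).bddAbove
  have hM0 : 0 ≤ M := hM ⟨0, interior_subset hP.2.1, dotp_zero_r s⟩
  have : (M + 1)⁻¹ • s ∈ dualPolytope P := by
    intro x hx
    rw [dotp_smul_l, inv_mul_le_iff₀ (by linarith)]
    linarith [hM ⟨x, hx, rfl⟩]
  have h2 := dual_le hP h _ this
  rw [dotp_smul_l] at h2
  have h3 : 0 < (M + 1)⁻¹ * dotp s s := mul_pos (inv_pos.2 (by linarith)) (dotp_self_pos hs)
  linarith

lemma exists_fn {P : Set (Fin d → ℝ)} (hP : IsReflexive P) : ∃ u, IsFN P u := by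
  obtain ⟨u, hu⟩ := (lp_compact hP.2.2).extremePoints_nonempty
    ⟨0, fun y _ => by simp [dotp]⟩
  exact ⟨u, ext_fn hP.1 hu⟩

lemma act_ncard {P : Set (Fin d → ℝ)} (hs : IsSimplicial P) (hd : 0 < d)
    {u} (hu : IsFN P u) : (act P u).ncard = d := by
  set F := {y ∈ P | dotp u y = 1} with hF
  have hext : IsExtreme ℝ P F := by
    refine ⟨fun x hx => hx.1, ?_⟩
    rintro x hx y hy z hz ⟨a, b, ha, hb, hab, rfl⟩
    refine ⟨hx, ?_⟩
    have h1 := hu.1 x hx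
    have h2 := hu.1 y hy
    have h3 := hz.2
    rw [dotp_add_r, dotp_smul_r, dotp_smul_r] at h3
    nlinarith
  have hsub : act P u ⊆ F := fun x hx => ⟨hx.1.1, hx.2⟩
  have hactF : F.extremePoints ℝ = act P u := by
    rw [hext.extremePoints_eq]
    ext x
    constructor
    · rintro ⟨h1, h2⟩; exact ⟨h2, h1.2⟩
    · intro h; exact ⟨hsub h, h.1⟩
  have hne : (act P u).Nonempty := by
    by_contra h
    rw [Set.not_nonempty_iff_eq_empty] at h
    have h2 := hu.2
    rw [h, Submodule.span_empty] at h2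
    have := congrArg (fun p : Submodule ℝ (Fin d → ℝ) => Module.finrank ℝ p) h2
    simp at this
    omega
  obtain ⟨a, ha⟩ := hne
  have hle : vectorSpan ℝ F ≤ LinearMap.ker (dotL u) := by
    rw [vectorSpan_def, Submodule.span_le]
    rintro _ ⟨x, hx, y, hy, rfl⟩
    simp [dotp_sub_r, hx.2, hy.2]
  have hlt : vectorSpan ℝ F < ⊤ := by
    rw [lt_top_iff_ne_top]
    intro h
    have h1 : a ∈ vectorSpan ℝ F := by rw [h]; trivial
    have h2 := hle h1
    rw [LinearMap.mem_ker, dotL_apply, ha.2] at h2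
    norm_num at h2
  have h1 := Submodule.finrank_lt hlt.ne
  rw [Module.finrank_fin_fun] at h1
  have h2 : (⊤ : Submodule ℝ (Fin d → ℝ)) ≤ Submodule.span ℝ {a} ⊔ vectorSpan ℝ F := by
    rw [← hu.2, Submodule.span_le]
    intro x hx
    have h3 : x - a ∈ vectorSpan ℝ F := vsub_mem_vectorSpan ℝ (hsub hx) (hsub ha)
    have h4 := Submodule.add_mem_sup (Submodule.mem_span_singleton_self (R := ℝ) a) h3
    simpa using h4
  have h3 := Submodule.finrank_mono h2
  have h4 := Submodule.finrank_add_le_finrank_add_finrank (Submodule.span ℝ {a}) (vectorSpan ℝ F)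
  have h5 : Module.finrank ℝ (Submodule.span ℝ {a}) ≤ 1 := by
    simpa using finrank_span_le_card (R := ℝ) ({a} : Set (Fin d → ℝ))
  rw [finrank_top, Module.finrank_fin_fun] at h3
  have := hs F ⟨u, ⟨a, hsub ha⟩, hu.1, rfl, by omega⟩
  rwa [hactF] at this

lemma fn_basis {P : Set (Fin d → ℝ)} (hP : IsReflexive P) (hs : IsSimplicial P) (hd : 0 < d)
    {u} (hu : IsFN P u) : ∃ b : Module.Basis (Fin d) ℝ (Fin d → ℝ), Set.range b = act P u := by
  have hfin : (act P u).Finite := (lp_ext_fin hP.1).subset fun x hx => hx.1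
  have := hfin.fintype
  have hc : Fintype.card (act P u) = d := by
    rw [← Nat.card_eq_fintype_card, Nat.card_coe_set_eq, act_ncard hs hd hu]
  let e := Fintype.equivFinOfCardEq hc
  let v : Fin d → (Fin d → ℝ) := fun i => (e.symm i : Fin d → ℝ)
  have hv : Set.range v = act P u := by
    have : v = Subtype.val ∘ e.symm := rfl
    rw [this, Set.range_comp, e.symm.surjective.range_eq]
    simp
  have hsp : ⊤ ≤ Submodule.span ℝ (Set.range v) := by rw [hv, hu.2]
  have hli : LinearIndependent ℝ v :=
    linearIndependent_of_top_le_span_of_card_eq_finrank hsp (by simp)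
  exact ⟨Module.Basis.mk hli hsp, by rw [Module.Basis.coe_mk, hv]⟩

lemma int_smul {P : Set (Fin d → ℝ)} (h0 : (0 : Fin d → ℝ) ∈ interior P) (z : Fin d → ℝ) :
    ∃ δ : ℝ, 0 < δ ∧ δ • z ∈ P := by
  have hc : Continuous fun δ : ℝ => δ • z := by fun_prop
  have h1 : ∀ᶠ δ in nhds (0 : ℝ), δ • z ∈ P :=
    hc.continuousAt.eventually_mem (by simpa using mem_interior_iff_mem_nhds.1 h0)
  have h1' : ∀ᶠ δ in nhdsWithin (0 : ℝ) (Set.Ioi 0), δ • z ∈ P := nhdsWithin_le_nhds h1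
  obtain ⟨δ, h2, h3⟩ := (h1'.and self_mem_nhdsWithin).exists
  exact ⟨δ, h3, h2⟩

lemma ext_ne_zero {P : Set (Fin d → ℝ)} (hP : IsReflexive P) (hd : 0 < d) {x}
    (hx : x ∈ Set.extremePoints ℝ P) : x ≠ 0 := by
  rintro rfl
  let z : Fin d → ℝ := fun _ => 1
  obtain ⟨δ, h1, h2⟩ := int_smul hP.2.1 z
  obtain ⟨ε, h3, h4⟩ := int_smul hP.2.1 (-z)
  have hs : 0 < ε + δ := by linarith
  have := hx.2 h2 h4 ⟨ε / (ε + δ), δ / (ε + δ), by positivity, by positivity, by field_simp, by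
    rw [smul_smul, smul_smul, smul_neg, ← sub_eq_add_neg, ← sub_smul]
    have : ε / (ε + δ) * δ - δ / (ε + δ) * ε = 0 := by ring
    rw [this, zero_smul]⟩
  have := congrFun this ⟨0, hd⟩
  simp [z] at this
  exact h1.ne' this

lemma neighbor {P : Set (Fin d → ℝ)} (hP : IsReflexive P) (hs : IsSimplicial P) (hd : 0 < d)
    {u} (hu : IsFN P u) (b : Module.Basis (Fin d) ℝ (Fin d → ℝ)) (hb : Set.range b = act P u)
    (i : Fin d) : ∃ (u' x : Fin d → ℝ) (t : ℝ), IsFN P u' ∧ 0 < t ∧ x ∈ Set.extremePoints ℝ P ∧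
      b.repr x i < 0 ∧ dotp u' x = 1 ∧ (∀ z, dotp u' z = dotp u z - t * b.repr z i) ∧
      ∀ z ∈ act P u', z = x ∨ ∃ k, k ≠ i ∧ z = b k := by
  have hba : ∀ k, b k ∈ act P u := fun k => hb ▸ Set.mem_range_self k
  obtain ⟨w, hw⟩ := exists_vec (b.coord i)
  have hw : ∀ x, b.repr x i = dotp w x := fun x => by rw [← hw]; rfl
  set S := {x ∈ Set.extremePoints ℝ P | dotp w x < 0} with hS
  have hSfin : S.Finite := (lp_ext_fin hP.1).subset fun x hx => hx.1
  have hSne : S.Nonempty := by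
    by_contra h
    rw [Set.not_nonempty_iff_eq_empty] at h
    have h1 : ∀ x ∈ Set.extremePoints ℝ P, dotp ((-1 : ℝ) • w) x ≤ 0 := by
      intro x hx
      rw [dotp_smul_l]
      by_contra h2
      have : x ∈ S := ⟨hx, by linarith⟩
      rw [h] at this
      exact this
    obtain ⟨δ, h3, h4⟩ := int_smul hP.2.1 (-(b i))
    have h5 := le_of_ext hP.1 h1 _ h4
    have h6 := hw (b i)
    simp only [Module.Basis.repr_self, Finsupp.single_eq_same] at h6
    rw [dotp_smul_l, dotp_smul_r, dotp_neg_r, ← h6] at h5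
    linarith
  obtain ⟨x, hxS, hmin⟩ := hSfin.exists_minimalFor (fun x => (1 - dotp u x) / (-dotp w x)) _ hSne
  have hmin : ∀ y ∈ S, (1 - dotp u x) / (-dotp w x) ≤ (1 - dotp u y) / (-dotp w y) := by
    intro y hy
    rcases le_total ((1 - dotp u x) / (-dotp w x)) ((1 - dotp u y) / (-dotp w y)) with h | h
    · exact h
    · exact hmin hy h
  set t := (1 - dotp u x) / (-dotp w x) with ht
  have hwx : dotp w x < 0 := hxS.2
  have hux : dotp u x < 1 := by
    refine lt_of_le_of_ne (hu.1 x hxS.1.1) fun h => ?_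
    have : x ∈ Set.range b := by rw [hb]; exact ⟨hxS.1, h⟩
    obtain ⟨k, rfl⟩ := this
    rw [← hw, Module.Basis.repr_self, Finsupp.single_apply] at hwx
    split_ifs at hwx <;> linarith
  have htpos : 0 < t := div_pos (by linarith) (by linarith)
  set u' := u + (-t) • w with hu'
  have hform : ∀ z, dotp u' z = dotp u z - t * b.repr z i := by
    intro z
    rw [hu', dotp_add_l, dotp_smul_l, hw]; ring
  have hx1 : dotp u' x = 1 := by
    have hne : -dotp w x ≠ 0 := by linarith
    have h1 : t * (-dotp w x) = 1 - dotp u x := div_mul_cancel₀ _ hne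
    rw [hform, hw]
    linarith
  have hdual : u' ∈ dualPolytope P := by
    apply le_of_ext hP.1
    intro z hz
    rw [hform, hw]
    have h1 := hu.1 z hz.1
    rcases lt_or_ge (dotp w z) 0 with h | h
    · have h2 := hmin z ⟨hz, h⟩
      rw [le_div_iff₀ (by linarith)] at h2
      linarith
    · nlinarith
  have hk : ∀ k, k ≠ i → b k ∈ act P u' := by
    intro k hk
    refine ⟨(hba k).1, ?_⟩
    rw [hform, (hba k).2]
    simp [hk]
  have hxa : x ∈ act P u' := ⟨hxS.1, hx1⟩
  have hFN : IsFN P u' := by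
    refine ⟨hdual, ?_⟩
    by_contra hne
    obtain ⟨f, hf0, hf⟩ := Submodule.exists_le_ker_of_lt_top _ (lt_top_iff_ne_top.2 hne)
    apply hf0
    have hfk : ∀ k, k ≠ i → f (b k) = 0 := fun k h => hf (Submodule.subset_span (hk k h))
    have hfx : f x = 0 := hf (Submodule.subset_span hxa)
    apply b.ext
    intro k
    by_cases h : k = i
    · subst h
      rw [← b.sum_repr x, map_sum, Finset.sum_eq_single k] at hfx
      · rw [map_smul, hw, smul_eq_mul] at hfx
        simpa [hwx.ne] using hfx
      · intro j _ hj
        simp [hfk j hj]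
      · simp
    · simp [hfk k h]
  refine ⟨u', x, t, hFN, htpos, hxS.1, by rw [hw]; exact hwx, hx1, hform, ?_⟩
  have hsub : insert x (b '' {i}ᶜ) ⊆ act P u' := by
    intro z hz
    rcases hz with rfl | ⟨k, hk', rfl⟩
    · exact hxa
    · exact hk k hk'
  have hnm : x ∉ b '' {i}ᶜ := by
    rintro ⟨k, -, rfl⟩
    rw [(hba k).2] at hux
    exact lt_irrefl _ hux
  have hcard : (insert x (b '' {i}ᶜ)).ncard = d := by
    rw [Set.ncard_insert_of_notMem hnm (Set.toFinite _), Set.ncard_image_of_injective _ b.injective,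
      Set.ncard_compl, Set.ncard_singleton, Nat.card_eq_fintype_card, Fintype.card_fin]
    omega
  have heq := Set.eq_of_subset_of_ncard_le hsub (by rw [act_ncard hs hd hFN, hcard])
    ((lp_ext_fin hP.1).subset fun x hx => hx.1)
  intro z hz
  rw [← heq] at hz
  rcases hz with rfl | ⟨k, hk', rfl⟩
  · exact Or.inl rfl
  · exact Or.inr ⟨k, hk', rfl⟩

lemma sum_repr_eq {P : Set (Fin d → ℝ)} {u} (b : Module.Basis (Fin d) ℝ (Fin d → ℝ))
    (hb : Set.range b = act P u) (z : Fin d → ℝ) : dotp u z = ∑ k, b.repr z k := by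
  have hba : ∀ k, b k ∈ act P u := fun k => hb ▸ Set.mem_range_self k
  conv_lhs => rw [← b.sum_repr z]
  rw [← dotL_apply, map_sum]
  refine Finset.sum_congr rfl fun k _ => ?_
  rw [map_smul, dotL_apply, (hba k).2]
  simp

/-- The neighbour data of a facet normal `u`. -/
structure NB (P : Set (Fin d → ℝ)) (u : Fin d → ℝ) where
  b : Module.Basis (Fin d) ℝ (Fin d → ℝ)
  hb : Set.range b = act P u
  n : Fin d → Fin d → ℝ
  x : Fin d → Fin d → ℝ
  t : Fin d → ℝ
  fn : ∀ i, IsFN P (n i)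
  tpos : ∀ i, 0 < t i
  ext : ∀ i, x i ∈ Set.extremePoints ℝ P
  neg : ∀ i, b.repr (x i) i < 0
  one : ∀ i, dotp (n i) (x i) = 1
  form : ∀ i z, dotp (n i) z = dotp u z - t i * b.repr z i
  acts : ∀ i, ∀ z ∈ act P (n i), z = x i ∨ ∃ k, k ≠ i ∧ z = b k

lemma exists_nb {P : Set (Fin d → ℝ)} (hP : IsReflexive P) (hs : IsSimplicial P) (hd : 0 < d)
    {u} (hu : IsFN P u) : Nonempty (NB P u) := by
  obtain ⟨b, hb⟩ := fn_basis hP hs hd hu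
  choose n x t h1 h2 h3 h4 h5 h6 h7 using neighbor hP hs hd hu b hb
  exact ⟨⟨b, hb, n, x, t, h1, h2, h3, h4, h5, h6, h7⟩⟩

lemma NB.mem {P : Set (Fin d → ℝ)} {u} (N : NB P u) (k) : N.b k ∈ act P u :=
  N.hb ▸ Set.mem_range_self k

lemma NB.zero {P : Set (Fin d → ℝ)} (hP : IsReflexive P) {u} (N : NB P u) {z}
    (hz : z ∈ Set.extremePoints ℝ P) (h0 : dotp u z = 0) {i} (hi : N.b.repr z i < 0) :
    z = N.x i := by
  have h1 := N.form i z
  have h2 : 0 < dotp (N.n i) z := by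
    rw [h1, h0]; nlinarith [N.tpos i]
  have h3 := (N.fn i).1 z hz.1
  obtain ⟨m, hm⟩ := fn_int hP (N.fn i) hz
  rw [hm] at h2 h3
  norm_cast at h2 h3
  have : m = 1 := by omega
  rcases N.acts i z ⟨hz, by rw [hm, this]; simp⟩ with h | ⟨k, -, rfl⟩
  · exact h
  · rw [(N.mem k).2] at h0; norm_num at h0

lemma NB.exists_neg {P : Set (Fin d → ℝ)} (hP : IsReflexive P) (hd : 0 < d) {u} (N : NB P u) {z}
    (hz : z ∈ Set.extremePoints ℝ P) (h0 : dotp u z = 0) : ∃ i, N.b.repr z i < 0 := by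
  by_contra! h
  apply ext_ne_zero hP hd hz
  rw [sum_repr_eq N.b N.hb, Finset.sum_eq_zero_iff_of_nonneg fun i _ => h i] at h0
  rw [← N.b.sum_repr z]
  exact Finset.sum_eq_zero fun i hi => by simp [h0 i hi]

lemma heights {P : Set (Fin d → ℝ)} (hP : IsReflexive P) (hs : IsSimplicial P) (hd : 0 < d)
    (hcard : (Set.extremePoints ℝ P).ncard = 3 * d) {u} (hu : IsFN P u) :
    (∀ x ∈ Set.extremePoints ℝ P, dotp u x = 1 ∨ dotp u x = 0 ∨ dotp u x = -1) ∧
      d ≤ ((lp_ext_fin hP.1).toFinset.filter (fun x => dotp u x = 0)).card := by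
  classical
  set E := (lp_ext_fin hP.1).toFinset with hE
  have hEm : ∀ x, x ∈ E ↔ x ∈ Set.extremePoints ℝ P := fun x => by simp [hE]
  have hEc : E.card = 3 * d := by rw [← hcard, Set.ncard_eq_toFinset_card _ (lp_ext_fin hP.1)]
  let g : (Fin d → ℝ) → (Fin d → ℝ) → ℝ := fun u x =>
    2 * (if dotp u x = 1 then 1 else 0) + (if dotp u x = 0 then 1 else 0) - 1
  have hle : ∀ u, IsFN P u → ∀ x ∈ E, dotp u x ≤ g u x := by
    intro u hu x hx
    have hx := (hEm x).1 hx
    obtain ⟨m, hm⟩ := fn_int hP hu hx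
    have h1 := hu.1 x hx.1
    by_cases a1 : dotp u x = 1
    · simp [g, a1]; norm_num
    by_cases a0 : dotp u x = 0
    · simp [g, a0]
    simp only [g, a1, a0, if_false]
    rw [hm] at h1 a1 a0 ⊢
    norm_cast at h1 a1 a0
    have : m ≤ -1 := by omega
    have : (m : ℝ) ≤ -1 := by exact_mod_cast this
    linarith
  have hg : ∀ u, IsFN P u → ∑ x ∈ E, g u x = (E.filter (fun x => dotp u x = 0)).card - d := by
    intro u hu
    have h1 : (E.filter (fun x => dotp u x = 1)).card = d := by
      refine Eq.trans ?_ (act_ncard hs hd hu)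
      rw [← Set.ncard_coe_finset]
      congr 1
      ext x
      simp [hEm, act]
    simp only [g, Finset.sum_sub_distrib, Finset.sum_add_distrib, ← Finset.mul_sum,
      Finset.sum_boole, h1, Finset.sum_const, hEc]
    simp
    ring
  have h0 : ∀ u, IsFN P u → (E.filter (fun x => dotp u x = 0)).card ≤ d := by
    intro u hu
    obtain ⟨N⟩ := exists_nb hP hs hd hu
    have : E.filter (fun x => dotp u x = 0) ⊆ Finset.univ.image N.x := by
      intro z hz
      rw [Finset.mem_filter, hEm] at hz
      obtain ⟨i, hi⟩ := N.exists_neg hP hd hz.1 hz.2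
      rw [N.zero hP hz.1 hz.2 hi]
      simp
    simpa using (Finset.card_le_card this).trans Finset.card_image_le
  have hsum : ∀ u, dotp u (∑ x ∈ E, x) = ∑ x ∈ E, dotp u x := fun u => by
    rw [← dotL_apply, map_sum]; rfl
  have hs0 : ∑ x ∈ E, x = 0 := by
    apply eq_zero_of_fn hP
    intro u hu
    rw [hsum]
    refine (Finset.sum_le_sum (hle u hu)).trans ?_
    rw [hg u hu]
    have : ((E.filter (fun x => dotp u x = 0)).card : ℝ) ≤ d := by exact_mod_cast h0 u hu
    linarith
  have hz := hsum u
  rw [hs0, dotp_zero_r] at hz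
  have h1 := Finset.sum_le_sum (hle u hu)
  have h2 := hg u hu
  have h3 : ((E.filter (fun x => dotp u x = 0)).card : ℝ) ≤ d := by exact_mod_cast h0 u hu
  have h4 : (d : ℝ) ≤ ((E.filter (fun x => dotp u x = 0)).card : ℝ) := by linarith
  refine ⟨?_, by exact_mod_cast h4⟩
  have h5 := (Finset.sum_eq_sum_iff_of_le (hle u hu)).1 (by linarith)
  intro x hx
  have h6 := h5 x ((hEm x).2 hx)
  simp only [g] at h6
  split_ifs at h6 with q1 q2 q2
  · exact Or.inl q1
  · exact Or.inl q1
  · exact Or.inr (Or.inl q2)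
  · right; right; rw [h6]; norm_num

lemma ext_neg {P : Set (Fin d → ℝ)} (hP : IsReflexive P) (hs : IsSimplicial P) (hd : 0 < d)
    (hcard : (Set.extremePoints ℝ P).ncard = 3 * d) {x} (hx : x ∈ Set.extremePoints ℝ P) :
    -x ∈ Set.extremePoints ℝ P := by
  have hneg : ∀ y ∈ P, -y ∈ P := by
    intro y hy
    apply bipolar hP
    intro u hu
    have := le_of_ext (u := (-1 : ℝ) • u) (c := 1) hP.1 (fun x hx => by
      rw [dotp_smul_l]
      rcases (heights hP hs hd hcard hu).1 x hx with h | h | h <;> rw [h] <;> norm_num) y hy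
    rw [dotp_smul_l] at this
    rw [dotp_neg_r]
    linarith
  refine ⟨hneg x hx.1, ?_⟩
  rintro y hy z hz ⟨a, b, ha, hb, hab, h⟩
  have := hx.2 (hneg y hy) (hneg z hz) ⟨a, b, ha, hb, hab, by
    rw [smul_neg, smul_neg, ← neg_add, h, neg_neg]⟩
  rw [← this, neg_neg]

lemma NB.struct {P : Set (Fin d → ℝ)} (hP : IsReflexive P) (hs : IsSimplicial P) (hd : 0 < d)
    (hcard : (Set.extremePoints ℝ P).ncard = 3 * d) {u} (hu : IsFN P u) (N : NB P u) :
    (∀ i, N.t i = 1) ∧ ∃ σ : Fin d → Fin d, (∀ i, σ i ≠ i) ∧ (∀ i, σ (σ i) = i) ∧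
      ∀ z, z ∈ Set.extremePoints ℝ P ↔
        ∃ i, z = N.b i ∨ z = - N.b i ∨ z = N.b (σ i) - N.b i := by
  classical
  obtain ⟨hh, hc⟩ := heights hP hs hd hcard hu
  set E0 := (lp_ext_fin hP.1).toFinset.filter (fun x => dotp u x = 0) with hE0
  have hE0m : ∀ x, x ∈ E0 ↔ x ∈ Set.extremePoints ℝ P ∧ dotp u x = 0 := fun x => by simp [hE0]
  have hsub : E0 ⊆ Finset.univ.image N.x := by
    intro z hz
    rw [hE0m] at hz
    obtain ⟨i, hi⟩ := N.exists_neg hP hd hz.1 hz.2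
    rw [N.zero hP hz.1 hz.2 hi]
    simp
  have hci : (Finset.univ.image N.x).card ≤ d := by
    simpa using Finset.card_image_le (s := (Finset.univ : Finset (Fin d))) (f := N.x)
  have heq : E0 = Finset.univ.image N.x := Finset.eq_of_subset_of_card_le hsub (hci.trans hc)
  have hinj : Function.Injective N.x := by
    have h1 : (Finset.univ.image N.x).card = (Finset.univ : Finset (Fin d)).card := by
      simp only [Finset.card_univ, Fintype.card_fin]
      rw [← heq] at hci ⊢
      omega
    have := Finset.card_image_iff.1 h1
    simpa using this
  have hx0 : ∀ i, dotp u (N.x i) = 0 := fun i =>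
    ((hE0m _).1 (heq ▸ Finset.mem_image_of_mem _ (Finset.mem_univ i))).2
  have hnn : ∀ i j, j ≠ i → 0 ≤ N.b.repr (N.x i) j := by
    intro i j hij
    by_contra! h
    exact hij (hinj (N.zero hP (N.ext i) (hx0 i) h)).symm
  have hσ : ∀ i, ∃ j, -N.x i = N.x j := by
    intro i
    have : -N.x i ∈ E0 := (hE0m _).2 ⟨ext_neg hP hs hd hcard (N.ext i), by
      rw [dotp_neg_r, hx0, neg_zero]⟩
    rw [heq] at this
    obtain ⟨j, -, hj⟩ := Finset.mem_image.1 this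
    exact ⟨j, hj.symm⟩
  choose σ hσ using hσ
  have hne : ∀ i, σ i ≠ i := by
    intro i h
    have h1 := hσ i
    rw [h] at h1
    have h2 := N.neg i
    have h3 := congrArg (fun z => N.b.repr z i) h1
    simp only [map_neg, Finsupp.neg_apply] at h3
    linarith
  have hinv : ∀ i, σ (σ i) = i := by
    intro i
    apply hinj
    rw [← hσ, ← hσ, neg_neg]
  have ht : ∀ i, N.t i = 1 := by
    intro i
    have h1 := N.form i (N.b i)
    rw [(N.mem i).2, Module.Basis.repr_self, Finsupp.single_eq_same, mul_one] at h1
    have hp := N.tpos i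
    rcases (heights hP hs hd hcard (N.fn i)).1 _ (N.mem i).1 with h | h | h
    · linarith
    · linarith
    · exfalso
      have h2 : -N.b i ∈ act P (N.n i) :=
        ⟨ext_neg hP hs hd hcard (N.mem i).1, by rw [dotp_neg_r, h, neg_neg]⟩
      have h3 : dotp u (-N.b i) = -1 := by rw [dotp_neg_r, (N.mem i).2]
      rcases N.acts i _ h2 with h4 | ⟨k, -, h4⟩
      · rw [h4, hx0] at h3; norm_num at h3
      · rw [h4, (N.mem k).2] at h3; norm_num at h3
  have hri : ∀ i, N.b.repr (N.x i) i = -1 := by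
    intro i
    have := N.form i (N.x i)
    rw [N.one, hx0, ht] at this
    linarith
  have hxf : ∀ i, N.x i = N.b (σ i) - N.b i := by
    intro i
    apply N.b.repr.injective
    ext k
    rw [map_sub, Module.Basis.repr_self, Module.Basis.repr_self, Finsupp.sub_apply,
      Finsupp.single_apply, Finsupp.single_apply]
    have hneg : ∀ k, N.b.repr (N.x (σ i)) k = - N.b.repr (N.x i) k := by
      intro k
      rw [← hσ, map_neg, Finsupp.neg_apply]
    by_cases h1 : i = k
    · subst h1
      rw [hri, if_neg (hne i), if_pos rfl]; norm_num
    · by_cases h2 : σ i = k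
      · subst h2
        rw [if_pos rfl, if_neg h1]
        have := hneg (σ i)
        rw [hri] at this
        linarith
      · rw [if_neg h2, if_neg h1]
        have a := hnn i k (Ne.symm h1)
        have b := hnn (σ i) k (Ne.symm h2)
        rw [hneg] at b
        linarith
  refine ⟨ht, σ, hne, hinv, fun z => ⟨fun hz => ?_, ?_⟩⟩
  · have hex : ∀ z ∈ act P u, ∃ i, z = N.b i := by
      intro z hz
      rw [← N.hb] at hz
      obtain ⟨i, rfl⟩ := hz
      exact ⟨i, rfl⟩
    rcases hh z hz with h | h | h
    · obtain ⟨i, hi⟩ := hex z ⟨hz, h⟩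
      exact ⟨i, Or.inl hi⟩
    · obtain ⟨i, hi⟩ := N.exists_neg hP hd hz h
      exact ⟨i, Or.inr (Or.inr (by rw [N.zero hP hz h hi, hxf]))⟩
    · obtain ⟨i, hi⟩ := hex (-z) ⟨ext_neg hP hs hd hcard hz, by rw [dotp_neg_r, h, neg_neg]⟩
      exact ⟨i, Or.inr (Or.inl (by rw [← hi, neg_neg]))⟩
  · rintro ⟨i, rfl | rfl | rfl⟩
    · exact (N.mem i).1
    · exact ext_neg hP hs hd hcard (N.mem i).1
    · rw [← hxf]; exact N.ext i

lemma exists_pairing (hde : Even d) (σ : Fin d → Fin d) (hne : ∀ i, σ i ≠ i)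
    (hinv : ∀ i, σ (σ i) = i) : ∃ e : Fin d ≃ Fin d, ∀ (j : ℕ) (h1 : 2 * j < d)
      (h2 : 2 * j + 1 < d), σ (e ⟨2 * j, h1⟩) = e ⟨2 * j + 1, h2⟩ := by
  classical
  set A := Finset.univ.filter (fun i => i < σ i) with hA
  have hAm : ∀ i, i ∈ A ↔ i < σ i := fun i => by simp [hA]
  have hsinj : Function.Injective σ := fun i j h => by rw [← hinv i, h, hinv]
  have hAc : A.image σ = Aᶜ := by
    ext i
    simp only [Finset.mem_image, Finset.mem_compl, hAm]
    constructor
    · rintro ⟨k, hk, rfl⟩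
      rw [hinv]
      exact not_lt.2 hk.le
    · intro h
      refine ⟨σ i, ?_, hinv i⟩
      rw [hinv]
      exact lt_of_le_of_ne (not_lt.1 h) (hne i)
  have hcard : A.card = d / 2 := by
    have h1 := congrArg Finset.card hAc
    rw [Finset.card_image_of_injective _ hsinj, Finset.card_compl, Fintype.card_fin] at h1
    have h2 := A.card_le_univ
    rw [Fintype.card_fin] at h2
    omega
  let a := A.orderEmbOfFin hcard
  have ha : ∀ j, a j < σ (a j) := fun j => (hAm _).1 (A.orderEmbOfFin_mem hcard j)
  have hlt : ∀ k : Fin d, (k : ℕ) / 2 < d / 2 := fun k => by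
    have := k.2; have := hde.two_dvd; omega
  let f : Fin d → Fin d := fun k =>
    if (k : ℕ) % 2 = 0 then a ⟨(k : ℕ) / 2, hlt k⟩ else σ (a ⟨(k : ℕ) / 2, hlt k⟩)
  have hcross : ∀ i j, a i ≠ σ (a j) := by
    intro i j h
    have h1 := ha i
    rw [h, hinv] at h1
    exact lt_asymm h1 (ha j)
  have hf : Function.Injective f := by
    intro k l h
    simp only [f] at h
    split_ifs at h with p q q
    · have := a.injective h
      simp only [Fin.mk.injEq] at this
      ext; omega
    · exact absurd h (hcross _ _)
    · exact absurd h.symm (hcross _ _)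
    · have := a.injective (hsinj h)
      simp only [Fin.mk.injEq] at this
      ext; omega
  refine ⟨Equiv.ofBijective f (Finite.injective_iff_bijective.1 hf), ?_⟩
  intro j h1 h2
  have e1 : (2 * j + 1) % 2 = 1 := by omega
  have e2 : (2 * j + 1) / 2 = j := by omega
  simp [f, e1, e2]

end helpers

/-- a `d`-dimensional simplicial reflexive polytope with `3d` vertices, `d` even,
splits into `d/2` copies of `V₂`. -/
theorem stmt3 {d : ℕ} (hde : Even d)
    (P : Set (Fin d → ℝ)) (hP : IsReflexive P) (hs : IsSimplicial P)
    (hcard : (Set.extremePoints ℝ P).ncard = 3 * d) :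
    ∃ φ : (Fin d → ℝ) ≃ₗ[ℝ] (Fin d → ℝ), Unimodular φ ∧ φ '' P = splitModelV2 d := by
  rcases Nat.eq_zero_or_pos d with rfl | hd
  · exfalso
    have h1 : Set.extremePoints ℝ P = ∅ := by
      rwa [Nat.mul_zero, Set.ncard_eq_zero (lp_ext_fin hP.1)] at hcard
    obtain ⟨x, hx⟩ := (lp_compact hP.1).extremePoints_nonempty ⟨0, interior_subset hP.2.1⟩
    rw [h1] at hx
    exact hx
  obtain ⟨u, hu⟩ := exists_fn hP
  obtain ⟨N⟩ := exists_nb hP hs hd hu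
  obtain ⟨ht, σ, hne, hinv, hext⟩ := N.struct hP hs hd hcard hu
  obtain ⟨e, he⟩ := exists_pairing hde σ hne hinv
  let s : Fin d → ℝˣ := fun k => if (k : ℕ) % 2 = 0 then 1 else -1
  let B := (N.b.reindex e.symm).unitsSMul s
  let φ : (Fin d → ℝ) ≃ₗ[ℝ] (Fin d → ℝ) := B.equivFun
  have hφ : ∀ x k, φ x k = (if (k : ℕ) % 2 = 0 then 1 else -1) * N.b.repr x (e k) := by
    intro x k
    simp only [φ, B, Module.Basis.equivFun_apply, Module.Basis.repr_unitsSMul,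
      Module.Basis.repr_reindex_apply, Equiv.symm_symm, s]
    split_ifs <;> simp [Units.smul_def]
  have hr : ∀ x, IsLP x → ∀ i, ∃ m : ℤ, N.b.repr x i = m := by
    intro x hx i
    obtain ⟨a, ha⟩ := dotp_int (fn_lp hP hu) hx
    obtain ⟨c, hc⟩ := dotp_int (fn_lp hP (N.fn i)) hx
    have := N.form i x
    rw [ht, ha, hc] at this
    exact ⟨a - c, by push_cast; linarith⟩
  refine ⟨φ, fun x => ⟨fun hx k => ?_, fun hx => ?_⟩, ?_⟩
  · obtain ⟨m, hm⟩ := hr x hx (e k)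
    rw [hφ, hm]
    split_ifs
    · exact ⟨m, by simp⟩
    · exact ⟨-m, by simp⟩
  · have h1 : ∀ i, ∃ m : ℤ, N.b.repr x i = m := by
      intro i
      obtain ⟨m, hm⟩ := hx (e.symm i)
      rw [hφ, Equiv.apply_symm_apply] at hm
      split_ifs at hm
      · exact ⟨m, by linarith⟩
      · exact ⟨-m, by push_cast; linarith⟩
    choose m hm using h1
    intro k
    have h2 : ∀ i, ∃ n : ℤ, N.b i k = n := fun i => lp_ext_lp hP.1 _ (N.mem i).1 k
    choose n hn using h2
    refine ⟨∑ i, m i * n i, ?_⟩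
    conv_lhs => rw [← N.b.sum_repr x]
    simp [Finset.sum_apply, hm, hn]
  · have hkey : ∀ (j : ℕ) (h1 : 2 * j < d) (h2 : 2 * j + 1 < d) (α β : ℤ),
        φ ((α : ℝ) • N.b (e ⟨2 * j, h1⟩) + (β : ℝ) • N.b (e ⟨2 * j + 1, h2⟩)) =
          embed2 d (2 * j) ![α, -β] := by
      intro j h1 h2 α β
      ext k
      rw [hφ]
      simp only [map_add, map_smul, Module.Basis.repr_self, Finsupp.add_apply, Finsupp.smul_apply,
        Finsupp.single_apply, EmbeddingLike.apply_eq_iff_eq, Fin.ext_iff, smul_eq_mul, embed2]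
      by_cases k1 : (k : ℕ) = 2 * j
      · simp [k1]
      · by_cases k2 : (k : ℕ) = 2 * j + 1
        · simp [k2, Nat.add_mod]
        · simp [k1, k2, Ne.symm k1, Ne.symm k2]
    have himg : φ '' Set.extremePoints ℝ P =
        ⋃ j ∈ Finset.range (d / 2), embed2 d (2 * j) '' V2v := by
      ext y
      simp only [Set.mem_image, Set.mem_iUnion, Finset.mem_range, exists_prop]
      constructor
      · rintro ⟨z, hz, rfl⟩
        obtain ⟨i, hi⟩ := (hext z).1 hz
        obtain ⟨k, rfl⟩ := e.surjective i
        have hj : (k : ℕ) / 2 < d / 2 := by have := k.2; have := hde.two_dvd; omega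
        have h1 : 2 * ((k : ℕ) / 2) < d := by omega
        have h2 : 2 * ((k : ℕ) / 2) + 1 < d := by omega
        have hk := hkey _ h1 h2
        have hp := he _ h1 h2
        have hp2 : σ (e ⟨2 * ((k : ℕ) / 2) + 1, h2⟩) = e ⟨2 * ((k : ℕ) / 2), h1⟩ := by
          rw [← hp, hinv]
        refine ⟨(k : ℕ) / 2, hj, ?_⟩
        rcases Nat.mod_two_eq_zero_or_one (k : ℕ) with hm | hm
        · have hkk : k = ⟨2 * ((k : ℕ) / 2), h1⟩ := by ext; simp; omega
          generalize hjj : (k : ℕ) / 2 = j at *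
          subst hkk
          rcases hi with rfl | rfl | rfl
          · exact ⟨![1, 0], by simp [V2v], by simpa using (hk 1 0).symm⟩
          · exact ⟨![-1, 0], by simp [V2v], by simpa using (hk (-1) 0).symm⟩
          · refine ⟨![-1, -1], by simp [V2v], ?_⟩
            rw [hp, ← hk (-1) 1]
            congr 1
            push_cast; module
        · have hkk : k = ⟨2 * ((k : ℕ) / 2) + 1, h2⟩ := by ext; simp; omega
          generalize hjj : (k : ℕ) / 2 = j at *
          subst hkk
          rcases hi with rfl | rfl | rfl
          · exact ⟨![0, -1], by simp [V2v], by simpa using (hk 0 1).symm⟩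
          · exact ⟨![0, 1], by simp [V2v], by simpa using (hk 0 (-1)).symm⟩
          · refine ⟨![1, 1], by simp [V2v], ?_⟩
            have := hk 1 (-1)
            rw [hp2, ← neg_neg (1 : ℤ)]
            simp only [neg_neg]
            rw [show (![1, 1] : Fin 2 → ℤ) = ![1, - -1] by simp, ← this]
            congr 1
            push_cast; module
      · rintro ⟨j, hj, v, hv, rfl⟩
        have h1 : 2 * j < d := by omega
        have h2 : 2 * j + 1 < d := by omega
        have hk := hkey _ h1 h2
        have hp := he _ h1 h2
        have hp2 : σ (e ⟨2 * j + 1, h2⟩) = e ⟨2 * j, h1⟩ := by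
          rw [← hp, hinv]
        refine ⟨((v 0 : ℤ) : ℝ) • N.b (e ⟨2 * j, h1⟩) +
          ((-v 1 : ℤ) : ℝ) • N.b (e ⟨2 * j + 1, h2⟩), ?_, ?_⟩
        · rw [hext]
          simp only [V2v, Set.mem_insert_iff, Set.mem_singleton_iff] at hv
          rcases hv with rfl | rfl | rfl | rfl | rfl | rfl
          · exact ⟨e ⟨2 * j, h1⟩, Or.inl (by simp)⟩
          · exact ⟨e ⟨2 * j + 1, h2⟩, Or.inr (Or.inl (by simp))⟩
          · exact ⟨e ⟨2 * j + 1, h2⟩, Or.inr (Or.inr (by rw [hp2]; simp; module))⟩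
          · exact ⟨e ⟨2 * j, h1⟩, Or.inr (Or.inl (by simp))⟩
          · exact ⟨e ⟨2 * j + 1, h2⟩, Or.inl (by simp)⟩
          · exact ⟨e ⟨2 * j, h1⟩, Or.inr (Or.inr (by rw [hp]; simp; module))⟩
        · rw [hk]
          congr 1
          ext i
          fin_cases i <;> simp
    rw [splitModelV2, ← himg, ← LinearEquiv.coe_coe, ← LinearMap.image_convexHull, lp_hull hP.1]
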